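/- Let R'(4) be the unital associative ℂ-algebra presented by the same generators C_I and the same relations (R1)–(R4) as R(4), but with relation family (R5) replaced by (R5'): for pairwise distinct i,j,k,ℓ ∈ {1,2,3,4}, 2C_j[C_{ik},C_{kℓ}] + (C_{ij}−C_i−C_j)[C_{kℓ},C_{jk}] + (C_{jℓ}−C_j−C_ℓ)[C_{jk},C_{ik}] − (C_{jk}−C_j−C_k)[C_{ij},C_{jℓ}] = 0. Then the identity map on the generators induces an isomorphism of ℂ-algebras R(4) ≅ R'(4); equivalently, modulo the relations (R1)–(R4), the family of relations (R5) and the family (R5') generate the same two-sided ideal of the free algebra. -/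

import Mathlib

noncomputable section

open Finset

variable {A : Type*} [Ring A] [Algebra ℂ A]

/-- Commutator `[a,b] = ab − ba`. -/
def cm (a b : A) : A := a * b - b * a

/-- Anticommutator `{a,b} = ab + ba`. -/
def acm (a b : A) : A := a * b + b * a

/-- Relations (R1): `[C_I, C_J] = 0` whenever `I ∩ J = ∅`, `I ⊆ J` or `J ⊆ I`. -/
def RelR1 (C : Finset (Fin 4) → A) : Prop :=
  ∀ I J : Finset (Fin 4), (I ∩ J = ∅ ∨ I ⊆ J ∨ J ⊆ I) → cm (C I) (C J) = 0

/-- Relations (R2): `C_I = (1/2)∑_{i≠j∈I} C_{ij} − (|I|−2)∑_{i∈I} C_i` for `|I| ≥ 3`. -/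
def RelR2 (C : Finset (Fin 4) → A) : Prop :=
  ∀ I : Finset (Fin 4), 3 ≤ I.card →
    C I = ((1 : ℂ)/2) • (∑ i ∈ I, ∑ j ∈ I \ {i}, C {i, j})
      - ((I.card : ℂ) - 2) • ∑ i ∈ I, C {i}

/-- Relations (R3), for nonempty pairwise disjoint `I, J, K`. -/
def RelR3 (C : Finset (Fin 4) → A) : Prop :=
  ∀ I J K : Finset (Fin 4), I.Nonempty → J.Nonempty → K.Nonempty →
    Disjoint I J → Disjoint J K → Disjoint I K →
    cm (C (I ∪ J)) (C (J ∪ K)) = cm (C (J ∪ K)) (C (I ∪ K)) ∧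
    cm (C (J ∪ K)) (C (I ∪ K)) = cm (C (I ∪ K)) (C (I ∪ J)) ∧
    cm (C (J ∪ K)) (cm (C (I ∪ J)) (C (J ∪ K))) =
      2 * (C (I ∪ K) * C (J ∪ K)) - 2 * (C (J ∪ K) * C (I ∪ J))
        + 2 * ((C J - C K) * (C (I ∪ J ∪ K) - C I))

/-- Relations (R4), for pairwise distinct `i, j, k, l`. -/
def RelR4 (C : Finset (Fin 4) → A) : Prop :=
  ∀ i j k l : Fin 4, i ≠ j → i ≠ k → i ≠ l → j ≠ k → j ≠ l → k ≠ l →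
    ((1 : ℂ)/2) • cm (C {k, l}) (cm (C {i, j}) (C {j, k})) =
      C {i, k} * C {j, l} - C {i, l} * C {j, k}
      + (C {i} + C {l}) * C {j, k} + (C {j} + C {k}) * C {i, l}
      - (C {j} + C {l}) * C {i, k} - (C {i} + C {k}) * C {j, l}
      + (C {i} - C {j}) * (C {l} - C {k})

/-- Relations (R5), for pairwise distinct `i, j, k, l`. -/
def RelR5 (C : Finset (Fin 4) → A) : Prop :=
  ∀ i j k l : Fin 4, i ≠ j → i ≠ k → i ≠ l → j ≠ k → j ≠ l → k ≠ l →
    ((1 : ℂ)/2) • cm (cm (C {i, j}) (C {j, k})) (cm (C {j, k}) (C {k, l})) =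
      -((cm (C {i, j}) (C {j, l}) + cm (C {i, k}) (C {k, l})) * (C {j, k} - C {j} - C {k}))

/-- The Casimir-type element `w_{I,J,K}` of the Racah algebra. -/
def wElt (C : Finset (Fin 4) → A) (I J K : Finset (Fin 4)) : A :=
  ((1 : ℂ)/4) • (cm (C (I ∪ J)) (C (J ∪ K))) ^ 2
  - ((1 : ℂ)/2) • acm ((C (I ∪ J)) ^ 2) (C (J ∪ K))
  - ((1 : ℂ)/2) • acm (C (I ∪ J)) ((C (J ∪ K)) ^ 2)
  + (C (I ∪ J)) ^ 2 + (C (J ∪ K)) ^ 2 + acm (C (I ∪ J)) (C (J ∪ K))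
  + ((1 : ℂ)/2) • ((C I + C J + C K + C (I ∪ J ∪ K)) *
      (acm (C (I ∪ J)) (C (J ∪ K)) - 2 * C (I ∪ J) - 2 * C (J ∪ K)))
  - (C I - C (I ∪ J ∪ K)) * (C J - C K) * C (I ∪ J)
  - (C I - C J) * (C (I ∪ J ∪ K) - C K) * C (J ∪ K)
  + (C I * C K - C (I ∪ J ∪ K) * C J) * (C (I ∪ J ∪ K) - C I + C J - C K)
  + (C I + C K) * (C (I ∪ J ∪ K) + C J)

/-- Relations (R5'), for pairwise distinct `i, j, k, l`. -/
def RelR5' (C : Finset (Fin 4) → A) : Prop :=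
  ∀ i j k l : Fin 4, i ≠ j → i ≠ k → i ≠ l → j ≠ k → j ≠ l → k ≠ l →
    2 * C {j} * cm (C {i, k}) (C {k, l})
    + (C {i, j} - C {i} - C {j}) * cm (C {k, l}) (C {j, k})
    + (C {j, l} - C {j} - C {l}) * cm (C {j, k}) (C {i, k})
    - (C {j, k} - C {j} - C {k}) * cm (C {i, j}) (C {j, l}) = 0

/-!
Put `P_{ij} = C_{ij} - C_i - C_j` and `F_{ijk} = [P_{ij}, P_{jk}]`. Since the `C_i` commute with
all generators, (R4) becomes `[P_{kl}, F_{ijk}] = 2 (P_{ik} P_{jl} - P_{il} P_{jk})`, and (R3)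
similarly expresses `[P_{jk}, F_{ijk}]` by products of two generators. By the Jacobi identity
`[F_{ijk}, F_{jkl}] = [P_{ij}, [P_{jk}, F_{jkl}]] - [P_{jk}, [P_{ij}, F_{jkl}]]`, where (R3)
evaluates the first inner bracket and (R4) the second. The result differs from what is wanted by
four brackets `[P, F]`, whose alternating sum is a multiple of `[P_{jk}, P_{il}] = 0` by (R4).
Hence the relator of (R5) at `(i, j, k, l)` is `-2` times the relator of (R5') at `(i, k, j, l)`.
-/

attribute [local instance] LieRing.ofAssociativeRing

section AbstractFamily

variable {ι R : Type*} [Ring R]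

theorem nodup_four_imp_iff {i j k l : ι} {p : Prop} :
    ([i, j, k, l].Nodup → p) ↔
      (i ≠ j → i ≠ k → i ≠ l → j ≠ k → j ≠ l → k ≠ l → p) := by
  grind

theorem lie_mul_right (x y z : R) : ⁅x, y * z⁆ = ⁅x, y⁆ * z + y * ⁅x, z⁆ := by
  simp only [Ring.lie_def]
  noncomm_ring

/-- The element `F_{ijk} = [P_{ij}, P_{jk}]` attached to a path `i – j – k`. -/
def pathBracket (P : ι → ι → R) (i j k : ι) : R := ⁅P i j, P j k⁆

/-- The relations (R1)–(R4) restricted to one- and two-element index sets and rewritten for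
`c_i = C_i` and the shifted generators `P_{ij} = C_{ij} - C_i - C_j`; the shift removes all
lower-order terms from (R4). -/
structure IsRacahFamily (c : ι → R) (P : ι → ι → R) : Prop where
  symm : ∀ i j, P i j = P j i
  lie_const : ∀ i j k, ⁅P i j, c k⁆ = 0
  lie_of_disjoint : ∀ {i j k l}, [i, j, k, l].Nodup → ⁅P i j, P k l⁆ = 0
  pathBracket_rotate : ∀ {i j k}, [i, j, k].Nodup → pathBracket P j k i = pathBracket P i j k
  lie_pathBracket_last : ∀ {i j k}, [i, j, k].Nodup →
    ⁅P j k, pathBracket P i j k⁆ =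
      2 * (P i k * (P j k + 2 * c j) - (P j k + 2 * c k) * P i j)
  lie_pathBracket_extend_last : ∀ {i j k l}, [i, j, k, l].Nodup →
    ⁅P k l, pathBracket P i j k⁆ = 2 * (P i k * P j l - P i l * P j k)

/-- Twice the difference of the two sides of (R5), in the shifted generators `P_{ij}`. -/
def quarticRelator (P : ι → ι → R) (i j k l : ι) : R :=
  ⁅pathBracket P i j k, pathBracket P j k l⁆ +
    2 * ((pathBracket P i j l + pathBracket P i k l) * P j k)

/-- The left-hand side of (R5'), with `c_i = C_i` and the shifted generators `P_{ij}`. -/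
def cubicRelator (c : ι → R) (P : ι → ι → R) (i j k l : ι) : R :=
  2 * c j * pathBracket P i k l + P i j * pathBracket P l k j + P j l * pathBracket P j k i
    - P j k * pathBracket P i j l

namespace IsRacahFamily

variable {c : ι → R} {P : ι → ι → R} {i j k l : ι}

theorem pathBracket_reverse (h : IsRacahFamily c P) (i j k : ι) :
    pathBracket P k j i = -pathBracket P i j k := by
  rw [pathBracket, pathBracket, h.symm k j, h.symm j i, lie_skew]

theorem lie_pathBracket_first (h : IsRacahFamily c P) (hd : [i, j, k].Nodup) :
    ⁅P i j, pathBracket P i j k⁆ =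
      2 * (P j k * (P i j + 2 * c i) - (P i j + 2 * c j) * P i k) := by
  rw [h.pathBracket_rotate (i := k) (by grind), h.lie_pathBracket_last (by grind), h.symm k i,
    h.symm k j]

theorem lie_pathBracket_extend_first (h : IsRacahFamily c P) (hd : [i, j, k, l].Nodup) :
    ⁅P i j, pathBracket P j k l⁆ = 2 * (P i l * P j k - P j l * P i k) := by
  rw [h.pathBracket_reverse l k j, lie_neg, h.symm i j, h.lie_pathBracket_extend_last (by grind),
    h.symm l j, h.symm k i, h.symm l i, h.symm k j]
  noncomm_ring

theorem lie_pathBracket_extend_middle (h : IsRacahFamily c P) (hd : [i, j, k, l].Nodup) :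
    ⁅P j l, pathBracket P i j k⁆ = 2 * (P j k * P i l - P k l * P i j) := by
  rw [h.pathBracket_rotate (i := k) (by grind), h.lie_pathBracket_extend_last (by grind),
    h.symm k j]

theorem lie_lie_pathBracket_first (h : IsRacahFamily c P) (hd : [i, j, k, l].Nodup) :
    ⁅P i j, ⁅P j k, pathBracket P j k l⁆⁆ =
      2 * (P k l * pathBracket P i j k - pathBracket P i j k * P j l
        - (P j k + 2 * c k) * pathBracket P i j l) := by
  have hjk : ⁅P i j, P j k⁆ = pathBracket P i j k := rfl
  have hjl : ⁅P i j, P j l⁆ = pathBracket P i j l := rfl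
  have hkl : ⁅P i j, P k l⁆ = 0 := h.lie_of_disjoint hd
  rw [h.lie_pathBracket_first (by grind)]
  simp only [two_mul, lie_add, lie_sub, lie_mul_right, add_mul, h.lie_const, hjk, hjl, hkl]
  noncomm_ring

theorem lie_lie_pathBracket_extend_first (h : IsRacahFamily c P) (hd : [i, j, k, l].Nodup) :
    ⁅P j k, ⁅P i j, pathBracket P j k l⁆⁆ =
      2 * (pathBracket P j k l * P i k - P j l * pathBracket P i j k) := by
  have hik : ⁅P j k, P i k⁆ = pathBracket P i j k := by
    rw [h.symm i k]
    exact h.pathBracket_rotate (by grind)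
  have hjl : ⁅P j k, P j l⁆ = -pathBracket P j k l := by
    rw [← lie_skew, h.symm j l, neg_inj]
    exact (h.pathBracket_rotate (by grind)).symm
  have hil : ⁅P j k, P i l⁆ = 0 := h.lie_of_disjoint (by grind)
  rw [h.lie_pathBracket_extend_first hd]
  simp only [two_mul, lie_add, lie_sub, lie_mul_right, lie_self, hik, hjl, hil]
  noncomm_ring

theorem sum_lie_pathBracket_eq_zero (h : IsRacahFamily c P) (hd : [i, j, k, l].Nodup) :
    ⁅P i k, pathBracket P j k l⁆ + ⁅P j l, pathBracket P i j k⁆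
      - ⁅P j k, pathBracket P i j l⁆ - ⁅P j k, pathBracket P i k l⁆ = 0 := by
  have hcomm : P j k * P i l - P i l * P j k = 0 := h.lie_of_disjoint (by grind)
  rw [h.symm i k, h.lie_pathBracket_extend_middle (by grind),
    h.lie_pathBracket_extend_middle hd, h.lie_pathBracket_extend_middle (by grind),
    h.symm j k, h.lie_pathBracket_extend_middle (by grind), h.symm k j, h.symm j i, h.symm l i,
    h.symm l k, h.symm l j]
  linear_combination (norm := noncomm_ring) 2 * hcomm

theorem quarticRelator_eq (h : IsRacahFamily c P) (hd : [i, j, k, l].Nodup) :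
    quarticRelator P i j k l = 2 * -cubicRelator c P i k j l := by
  have hjacobi : ⁅pathBracket P i j k, pathBracket P j k l⁆ =
      ⁅P i j, ⁅P j k, pathBracket P j k l⁆⁆ - ⁅P j k, ⁅P i j, pathBracket P j k l⁆⁆ :=
    lie_lie ..
  have hsum := h.sum_lie_pathBracket_eq_zero hd
  rw [h.lie_lie_pathBracket_first hd, h.lie_lie_pathBracket_extend_first hd] at hjacobi
  rw [quarticRelator, hjacobi, cubicRelator, h.pathBracket_reverse i j k, h.symm k j,
    ← h.pathBracket_rotate (i := l) (by grind)]
  simp only [Ring.lie_def] at hsum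
  linear_combination (norm := noncomm_ring) 2 * hsum

theorem quarticRelator_eq_zero_iff (h : IsRacahFamily c P) (hd : [i, j, k, l].Nodup)
    (htwo : IsUnit (2 : R)) :
    quarticRelator P i j k l = 0 ↔ cubicRelator c P i k j l = 0 := by
  rw [h.quarticRelator_eq hd, htwo.mul_right_eq_zero, neg_eq_zero]

end IsRacahFamily

end AbstractFamily

section Generators

variable {R : Type*} [Ring R] {C : Finset (Fin 4) → R} {i j k l : Fin 4}

/-- The shifted generator `P_{ij} = C_{ij} - C_i - C_j`. -/
def shiftedPair {ι : Type*} [DecidableEq ι] (C : Finset ι → R) (i j : ι) : R :=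
  C {i, j} - C {i} - C {j}

theorem shiftedPair_comm {ι : Type*} [DecidableEq ι] (C : Finset ι → R) (i j : ι) :
    shiftedPair C i j = shiftedPair C j i := by
  rw [shiftedPair, shiftedPair, pair_comm, sub_right_comm]

namespace RelR1

theorem commute_singleton (h1 : RelR1 C) (I : Finset (Fin 4)) (i : Fin 4) :
    Commute (C I) (C {i}) := by
  refine sub_eq_zero.mp (h1 I {i} ?_)
  by_cases hi : i ∈ I
  · exact .inr (.inr (singleton_subset_iff.mpr hi))
  · exact .inl (disjoint_iff_inter_eq_empty.mp (disjoint_singleton_right.mpr hi))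

theorem lie_singleton (h1 : RelR1 C) (I : Finset (Fin 4)) (i : Fin 4) : ⁅C I, C {i}⁆ = 0 :=
  (h1.commute_singleton I i).lie_eq

theorem singleton_lie (h1 : RelR1 C) (i : Fin 4) (I : Finset (Fin 4)) : ⁅C {i}, C I⁆ = 0 :=
  (h1.commute_singleton I i).symm.lie_eq

theorem shiftedPair_lie_singleton (h1 : RelR1 C) (i j k : Fin 4) :
    ⁅shiftedPair C i j, C {k}⁆ = 0 := by
  simp only [shiftedPair, sub_lie, h1.lie_singleton, sub_zero]

theorem shiftedPair_lie_shiftedPair (h1 : RelR1 C) (i j k l : Fin 4) :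
    ⁅shiftedPair C i j, shiftedPair C k l⁆ = ⁅C {i, j}, C {k, l}⁆ := by
  simp only [shiftedPair, lie_sub, sub_lie, h1.lie_singleton, h1.singleton_lie, sub_zero]

theorem pathBracket_shiftedPair (h1 : RelR1 C) (i j k : Fin 4) :
    pathBracket (shiftedPair C) i j k = cm (C {i, j}) (C {j, k}) :=
  h1.shiftedPair_lie_shiftedPair i j j k

theorem shiftedPair_lie_pathBracket (h1 : RelR1 C) (m n i j k : Fin 4) :
    ⁅shiftedPair C m n, pathBracket (shiftedPair C) i j k⁆ =
      cm (C {m, n}) (cm (C {i, j}) (C {j, k})) := by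
  have hsingleton (a : Fin 4) : ⁅C {a}, ⁅C {i, j}, C {j, k}⁆⁆ = 0 := by
    rw [leibniz_lie, h1.singleton_lie, h1.singleton_lie, zero_lie, lie_zero, add_zero]
  rw [pathBracket, h1.shiftedPair_lie_shiftedPair, shiftedPair, sub_lie, sub_lie, hsingleton,
    hsingleton, sub_zero, sub_zero]
  rfl

theorem shiftedPair_lie_shiftedPair_of_nodup (h1 : RelR1 C) (hd : [i, j, k, l].Nodup) :
    ⁅shiftedPair C i j, shiftedPair C k l⁆ = 0 := by
  rw [h1.shiftedPair_lie_shiftedPair]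
  exact h1 _ _ (.inl (by grind))

end RelR1

theorem RelR3.of_nodup (h3 : RelR3 C) (hd : [i, j, k].Nodup) :
    cm (C {i, j}) (C {j, k}) = cm (C {j, k}) (C {i, k}) ∧
      cm (C {j, k}) (cm (C {i, j}) (C {j, k})) =
        2 * (C {i, k} * C {j, k}) - 2 * (C {j, k} * C {i, j})
          + 2 * ((C {j} - C {k}) * (C {i, j, k} - C {i})) := by
  have h := h3 {i} {j} {k} (singleton_nonempty i) (singleton_nonempty j) (singleton_nonempty k)
    (disjoint_singleton.mpr (by grind)) (disjoint_singleton.mpr (by grind))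
    (disjoint_singleton.mpr (by grind))
  simp only [← insert_eq, insert_union] at h
  exact ⟨h.1, h.2.2⟩

theorem RelR3.pathBracket_shiftedPair_rotate (h3 : RelR3 C) (h1 : RelR1 C)
    (hd : [i, j, k].Nodup) :
    pathBracket (shiftedPair C) j k i = pathBracket (shiftedPair C) i j k := by
  rw [h1.pathBracket_shiftedPair, h1.pathBracket_shiftedPair, pair_comm k i, (h3.of_nodup hd).1]

theorem relR5'_iff_cubicRelator_eq_zero (h1 : RelR1 C) :
    RelR5' C ↔ ∀ i j k l, [i, j, k, l].Nodup →
      cubicRelator (fun i => C {i}) (shiftedPair C) i j k l = 0 := by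
  refine forall₄_congr fun i j k l => ?_
  simp only [nodup_four_imp_iff, cubicRelator, h1.pathBracket_shiftedPair, pair_comm l k,
    pair_comm k j, pair_comm k i]
  rfl

end Generators

section Presentation

variable {C : Finset (Fin 4) → A} {i j k l : Fin 4}

theorem RelR2.apply_triple (h2 : RelR2 C) (hd : [i, j, k].Nodup) :
    C {i, j, k} = C {i, j} + C {j, k} + C {i, k} - C {i} - C {j} - C {k} := by
  have hcard : #{i, j, k} = 3 := by grind
  have hi : ({i, j, k} : Finset (Fin 4)) \ {i} = {j, k} := by grind
  have hj : ({i, j, k} : Finset (Fin 4)) \ {j} = {i, k} := by grind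
  have hk : ({i, j, k} : Finset (Fin 4)) \ {k} = {i, j} := by grind
  obtain ⟨hij, hik, hjk⟩ : i ≠ j ∧ i ≠ k ∧ j ≠ k := by grind
  have hi' : i ∉ ({j, k} : Finset (Fin 4)) := by grind
  rw [h2 _ hcard.ge, hcard]
  simp only [sum_insert hi', sum_pair hjk, hi, hj, hk, sum_pair hik, sum_pair hij,
    pair_comm j i, pair_comm k i, pair_comm k j]
  module

theorem half_smul_eq_iff {x y : A} : ((1 : ℂ) / 2) • x = y ↔ x = 2 * y := by
  rw [one_div, inv_smul_eq_iff₀ two_ne_zero, two_smul, two_mul]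

theorem RelR3.lie_pathBracket_last (h3 : RelR3 C) (h1 : RelR1 C) (h2 : RelR2 C)
    (hd : [i, j, k].Nodup) :
    ⁅shiftedPair C j k, pathBracket (shiftedPair C) i j k⁆ =
      2 * (shiftedPair C i k * (shiftedPair C j k + 2 * C {j})
        - (shiftedPair C j k + 2 * C {k}) * shiftedPair C i j) := by
  have hcomm (I : Finset (Fin 4)) (m : Fin 4) : C I * C {m} = C {m} * C I :=
    h1.commute_singleton I m
  rw [h1.shiftedPair_lie_pathBracket, (h3.of_nodup hd).2, h2.apply_triple hd]
  simp only [shiftedPair, two_mul, mul_sub, sub_mul, mul_add, add_mul, hcomm {j, k},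
    hcomm {i, k}, hcomm {k} j, hcomm {k} i, hcomm {j} i]
  abel

theorem RelR4.lie_pathBracket_extend_last (h4 : RelR4 C) (h1 : RelR1 C)
    (hd : [i, j, k, l].Nodup) :
    ⁅shiftedPair C k l, pathBracket (shiftedPair C) i j k⁆ =
      2 * (shiftedPair C i k * shiftedPair C j l - shiftedPair C i l * shiftedPair C j k) := by
  have hcomm (I : Finset (Fin 4)) (m : Fin 4) : C I * C {m} = C {m} * C I :=
    h1.commute_singleton I m
  have hR4 := half_smul_eq_iff.mp (nodup_four_imp_iff.mpr (h4 i j k l) hd)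
  rw [h1.shiftedPair_lie_pathBracket, hR4]
  congr 1
  simp only [shiftedPair, mul_sub, sub_mul, add_mul, hcomm {i, k}, hcomm {i, l}, hcomm {k} j,
    hcomm {l} j, hcomm {l} k]
  abel

theorem isRacahFamily_shiftedPair (h1 : RelR1 C) (h2 : RelR2 C) (h3 : RelR3 C) (h4 : RelR4 C) :
    IsRacahFamily (fun i => C {i}) (shiftedPair C) where
  symm := shiftedPair_comm C
  lie_const := h1.shiftedPair_lie_singleton
  lie_of_disjoint := h1.shiftedPair_lie_shiftedPair_of_nodup
  pathBracket_rotate := h3.pathBracket_shiftedPair_rotate h1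
  lie_pathBracket_last := h3.lie_pathBracket_last h1 h2
  lie_pathBracket_extend_last := h4.lie_pathBracket_extend_last h1

theorem relR5_iff_quarticRelator_eq_zero (h1 : RelR1 C) :
    RelR5 C ↔ ∀ i j k l, [i, j, k, l].Nodup → quarticRelator (shiftedPair C) i j k l = 0 := by
  simp only [RelR5, nodup_four_imp_iff, half_smul_eq_iff, quarticRelator,
    h1.pathBracket_shiftedPair, ← eq_neg_iff_add_eq_zero, mul_neg]
  rfl

end Presentation

/-- Modulo the relations (R1)–(R4), the family of relations (R5) is equivalent to the
family (R5'); since this holds for an arbitrary algebra `A` and an arbitrary family `C`,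
the identity map on the generators induces an isomorphism `R(4) ≅ R'(4)` of the two
presented algebras. -/
theorem stmt8 (C : Finset (Fin 4) → A) (hC0 : C ∅ = 0)
    (h1 : RelR1 C) (h2 : RelR2 C) (h3 : RelR3 C) (h4 : RelR4 C) :
    RelR5 C ↔ RelR5' C := by
  have hP := isRacahFamily_shiftedPair h1 h2 h3 h4
  have htwo : IsUnit (2 : A) := by
    simpa only [map_ofNat] using (IsUnit.mk0 (2 : ℂ) two_ne_zero).map (algebraMap ℂ A)
  rw [relR5_iff_quarticRelator_eq_zero h1, relR5'_iff_cubicRelator_eq_zero h1]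
  constructor
  · intro h i j k l hd
    have hd' : [i, k, j, l].Nodup := by grind
    exact (hP.quarticRelator_eq_zero_iff hd' htwo).mp (h i k j l hd')
  · intro h i j k l hd
    exact (hP.quarticRelator_eq_zero_iff hd htwo).mpr (h i k j l (by grind))
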